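/- arXiv:1805.07430 — 2 statements merged into one kernel-verified Lean document; each statement's English description precedes it below -/
import Mathlib

section
/- Let the BARRONS iterates x_1, …, x_T be as in the context with parameters 0 < β ≤ 1/2 and 0 < η ≤ 1. Then Σ_{t=1}^T ⟨∇_t, x_t − x_{t+1}⟩ ≤ 8·N·ln T/β. -/
/-!
Comparing the objective at `x_{t+1}` and `x_t` gives `⟨∇_t, x_t - x_{t+1}⟩ ≥ D_{ψ_t}(x_{t+1}, x_t)`,
and the log-barrier part of the divergence, being nonnegative, can be dropped. So the linear term
dominates `β/2` times the `A_t`-norm squared of the displacement, and by Fenchel–Young it is at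
most `2/β · ∇_tᵀ A_t⁻¹ ∇_t`. As `A_t` is a rank-one update of `A_{t-1}`, these quadratic forms
are bounded by increments of `ln det A_t`, which telescope. The determinant of `A_T` is controlled
by its trace, and the trace by `‖∇_t‖² ≤ (N T)²`, valid on the truncated simplex.
-/

open Finset Matrix

section Matrices

variable {ι : Type*} [Fintype ι]

theorem sum_sum_mul_mul_eq_dotProduct_mulVec {R : Type*} [NonUnitalSemiring R]
    (A : Matrix ι ι R) (p q : ι → R) :
    ∑ i, ∑ j, p i * A i j * q j = p ⬝ᵥ A *ᵥ q := by
  simp only [dotProduct, mulVec, mul_sum, mul_assoc]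

theorem dotProduct_mulVec_comm_of_isSymm {R : Type*} [CommSemiring R] {A : Matrix ι ι R}
    (hA : A.IsSymm) (p q : ι → R) : p ⬝ᵥ A *ᵥ q = q ⬝ᵥ A *ᵥ p := by
  rw [dotProduct_mulVec, ← mulVec_transpose, hA.eq, dotProduct_comm]

variable [DecidableEq ι]

theorem det_sub_vecMulVec {R : Type*} [CommRing R] {A : Matrix ι ι R} (hA : IsUnit A.det)
    (u v : ι → R) : (A - vecMulVec u v).det = A.det * (1 - v ⬝ᵥ A⁻¹ *ᵥ u) := by
  have hfactor : A - vecMulVec u v =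
      A * (1 + replicateCol Unit (A⁻¹ *ᵥ u) * replicateRow Unit (-v)) := by
    rw [← vecMulVec_eq, Matrix.mul_add, Matrix.mul_one, mul_vecMulVec, mulVec_mulVec,
      mul_nonsing_inv A hA, one_mulVec, vecMulVec_neg, sub_eq_add_neg]
  rw [hfactor, det_mul, det_one_add_replicateCol_mul_replicateRow, neg_dotProduct,
    ← sub_eq_add_neg]

theorem dotProduct_inv_mulVec_le_log_det_sub_log_det {B : Matrix ι ι ℝ} (hB : B.PosDef)
    (g : ι → ℝ) :
    g ⬝ᵥ (B + vecMulVec g g)⁻¹ *ᵥ g ≤ Real.log (B + vecMulVec g g).det - Real.log B.det := by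
  set A := B + vecMulVec g g with hAB
  have hA : A.PosDef := hB.add_posSemidef (by simpa using posSemidef_vecMulVec_self_star g)
  have hdet : B.det = A.det * (1 - g ⬝ᵥ A⁻¹ *ᵥ g) := by
    rw [← det_sub_vecMulVec hA.det_pos.ne'.isUnit, hAB, add_sub_cancel_right]
  have hpos : 0 < 1 - g ⬝ᵥ A⁻¹ *ᵥ g :=
    (mul_pos_iff_of_pos_left hA.det_pos).mp (hdet ▸ hB.det_pos)
  rw [hdet, Real.log_mul hA.det_pos.ne' hpos.ne']
  linarith [Real.log_le_sub_one_of_pos hpos]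

theorem two_mul_dotProduct_sub_le_dotProduct_inv_mulVec {A : Matrix ι ι ℝ} (hA : A.PosDef)
    (g z : ι → ℝ) : 2 * (g ⬝ᵥ z) - z ⬝ᵥ A *ᵥ z ≤ g ⬝ᵥ A⁻¹ *ᵥ g := by
  have hinv : A *ᵥ (A⁻¹ *ᵥ g) = g := by
    rw [mulVec_mulVec, mul_nonsing_inv A hA.det_pos.ne'.isUnit, one_mulVec]
  have hcross : A⁻¹ *ᵥ g ⬝ᵥ A *ᵥ z = g ⬝ᵥ z := by
    rw [dotProduct_mulVec_comm_of_isSymm (isHermitian_iff_isSymm.mp hA.isHermitian), hinv,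
      dotProduct_comm]
  have hsq : 0 ≤ (A⁻¹ *ᵥ g - z) ⬝ᵥ A *ᵥ (A⁻¹ *ᵥ g - z) := by
    simpa using hA.posSemidef.dotProduct_mulVec_nonneg (A⁻¹ *ᵥ g - z)
  simp only [mulVec_sub, sub_dotProduct, dotProduct_sub, hinv, hcross] at hsq
  rw [dotProduct_comm (A⁻¹ *ᵥ g) g, dotProduct_comm z g] at hsq
  linarith

theorem log_det_le_card_mul_log_trace_div_card [Nonempty ι] {A : Matrix ι ι ℝ} (hA : A.PosDef) :
    Real.log A.det ≤ Fintype.card ι * Real.log (A.trace / Fintype.card ι) := by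
  have hcard : (0 : ℝ) < Fintype.card ι := by exact_mod_cast Fintype.card_pos
  set eig := hA.isHermitian.eigenvalues
  have htrace : A.trace = ∑ i, eig i := by simpa using hA.isHermitian.trace_eq_sum_eigenvalues
  have hdet : A.det = ∏ i, eig i := by simpa using hA.isHermitian.det_eq_prod_eigenvalues
  have hjensen : ∑ i, (Fintype.card ι : ℝ)⁻¹ • Real.log (eig i) ≤
      Real.log (∑ i, (Fintype.card ι : ℝ)⁻¹ • eig i) :=
    strictConcaveOn_log_Ioi.concaveOn.le_map_sum (fun _ _ => by positivity)
      (by simp) fun i _ => hA.eigenvalues_pos i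
  rw [hdet, htrace, Real.log_prod fun i _ => (hA.eigenvalues_pos i).ne', div_eq_inv_mul]
  rwa [← smul_sum, ← smul_sum, smul_eq_mul, smul_eq_mul, inv_mul_le_iff₀ hcard] at hjensen

end Matrices

section EllipticalPotential

variable {ι : Type*} [DecidableEq ι]

/-- The regularized Gram matrix `α I + ∑_{s ≤ t} g_s g_sᵀ` of a sequence of vectors, the matrix
`A_t` of online Newton methods. Vectors are numbered from `1`. -/
def regularizedGram (α : ℝ) (g : ℕ → ι → ℝ) (t : ℕ) : Matrix ι ι ℝ :=
  α • 1 + ∑ s ∈ Icc 1 t, vecMulVec (g s) (g s)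

theorem regularizedGram_zero (α : ℝ) (g : ℕ → ι → ℝ) : regularizedGram α g 0 = α • 1 := by
  simp [regularizedGram]

theorem regularizedGram_succ (α : ℝ) (g : ℕ → ι → ℝ) (t : ℕ) :
    regularizedGram α g (t + 1) =
      regularizedGram α g t + vecMulVec (g (t + 1)) (g (t + 1)) := by
  rw [regularizedGram, sum_Icc_succ_top (by lia), ← add_assoc, ← regularizedGram]

theorem eq_regularizedGram_of_rankOne_updates {T : ℕ} {α : ℝ} {g : ℕ → ι → ℝ}
    {A : ℕ → Matrix ι ι ℝ} (hzero : A 0 = α • 1)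
    (hupdate : ∀ t ∈ Icc 1 T, A t = A (t - 1) + vecMulVec (g t) (g t)) :
    ∀ t ≤ T, A t = regularizedGram α g t := by
  intro t ht
  induction t with
  | zero => rw [hzero, regularizedGram_zero]
  | succ t ih =>
    rw [hupdate (t + 1) (mem_Icc.mpr ⟨by lia, ht⟩), Nat.add_sub_cancel, ih (by lia),
      regularizedGram_succ]

theorem regularizedGram_posDef [Finite ι] {α : ℝ} (hα : 0 < α) (g : ℕ → ι → ℝ) (t : ℕ) :
    (regularizedGram α g t).PosDef :=
  (PosDef.one.smul hα).add_posSemidef <| posSemidef_sum _ fun s _ => by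
    simpa using posSemidef_vecMulVec_self_star (g s)

variable [Fintype ι]

theorem trace_regularizedGram (α : ℝ) (g : ℕ → ι → ℝ) (t : ℕ) :
    (regularizedGram α g t).trace = α * Fintype.card ι + ∑ s ∈ Icc 1 t, g s ⬝ᵥ g s := by
  simp [regularizedGram, trace_sum, trace_vecMulVec]

theorem sum_dotProduct_inv_mulVec_le_log_det_sub_log_det {α : ℝ} (hα : 0 < α) (g : ℕ → ι → ℝ)
    (T : ℕ) :
    ∑ t ∈ Icc 1 T, g t ⬝ᵥ (regularizedGram α g t)⁻¹ *ᵥ g t ≤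
      Real.log (regularizedGram α g T).det - Real.log (regularizedGram α g 0).det := by
  induction T with
  | zero => simp
  | succ T ih =>
    have hupdate :=
      dotProduct_inv_mulVec_le_log_det_sub_log_det (regularizedGram_posDef hα g T) (g (T + 1))
    rw [← regularizedGram_succ] at hupdate
    rw [sum_Icc_succ_top (by lia)]
    linarith

theorem elliptical_potential_le [Nonempty ι] {α : ℝ} (hα : 0 < α) (g : ℕ → ι → ℝ) (T : ℕ) :
    ∑ t ∈ Icc 1 T, g t ⬝ᵥ (regularizedGram α g t)⁻¹ *ᵥ g t ≤
      Fintype.card ι *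
        Real.log (1 + (∑ t ∈ Icc 1 T, g t ⬝ᵥ g t) / (Fintype.card ι * α)) := by
  have hcard : (0 : ℝ) < Fintype.card ι := by exact_mod_cast Fintype.card_pos
  have hG := regularizedGram_posDef hα g T
  have hdet_zero : Real.log (regularizedGram α g 0).det = Fintype.card ι * Real.log α := by
    simp [regularizedGram_zero]
  calc ∑ t ∈ Icc 1 T, g t ⬝ᵥ (regularizedGram α g t)⁻¹ *ᵥ g t
      ≤ Real.log (regularizedGram α g T).det - Real.log (regularizedGram α g 0).det :=
        sum_dotProduct_inv_mulVec_le_log_det_sub_log_det hα g T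
    _ ≤ Fintype.card ι * Real.log ((regularizedGram α g T).trace / Fintype.card ι) -
          Fintype.card ι * Real.log α := by
        rw [hdet_zero]
        gcongr
        exact log_det_le_card_mul_log_trace_div_card hG
    _ = Fintype.card ι * Real.log ((regularizedGram α g T).trace / Fintype.card ι / α) := by
        rw [Real.log_div (div_pos hG.trace_pos hcard).ne' hα.ne', mul_sub]
    _ = _ := by
        rw [trace_regularizedGram, div_div, add_div, mul_comm α, div_self (by positivity)]

end EllipticalPotential

section MirrorDescent

variable {ι : Type*} [Fintype ι]

/-- The Bregman divergence of a function `f` on `ℝ^ι`, its gradient field `f'` being supplied by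
the caller. -/
def bregman (f : (ι → ℝ) → ℝ) (f' : (ι → ℝ) → ι → ℝ) (p q : ι → ℝ) : ℝ :=
  f p - f q - f' q ⬝ᵥ (p - q)

/-- The quadratic form `β/2 · pᵀAp` plus the logarithmic barrier with weights `a`, the regularizer
`ψ_t` of BARRONS when `a i = 1 / η_{t,i}`. -/
noncomputable def barronsRegularizer (β : ℝ) (A : Matrix ι ι ℝ) (a p : ι → ℝ) : ℝ :=
  β / 2 * (p ⬝ᵥ A *ᵥ p) + ∑ i, a i * Real.log (1 / p i)

/-- The gradient of `barronsRegularizer β A a` at `p`, for symmetric `A` and positive `p`. -/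
noncomputable def barronsRegularizerGrad (β : ℝ) (A : Matrix ι ι ℝ) (a p : ι → ℝ) : ι → ℝ :=
  fun i => β * (A *ᵥ p) i - a i * (1 / p i)

@[simp]
theorem bregman_self (f : (ι → ℝ) → ℝ) (f' : (ι → ℝ) → ι → ℝ) (p : ι → ℝ) :
    bregman f f' p p = 0 := by
  simp [bregman]

theorem dotProduct_mulVec_sub_sub_two_mul {A : Matrix ι ι ℝ} (hA : A.IsSymm) (p q : ι → ℝ) :
    p ⬝ᵥ A *ᵥ p - q ⬝ᵥ A *ᵥ q - 2 * (A *ᵥ q ⬝ᵥ (p - q)) = (p - q) ⬝ᵥ A *ᵥ (p - q) := by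
  simp only [mulVec_sub, sub_dotProduct, dotProduct_sub, dotProduct_comm (A *ᵥ q),
    dotProduct_mulVec_comm_of_isSymm hA q p]
  ring

theorem log_one_div_sub_add_nonneg {u v : ℝ} (hu : 0 < u) (hv : 0 < v) :
    0 ≤ Real.log (1 / u) - Real.log (1 / v) + 1 / v * (u - v) := by
  have hlog := Real.log_le_sub_one_of_pos (div_pos hu hv)
  rw [Real.log_div hu.ne' hv.ne'] at hlog
  have hlin : 1 / v * (u - v) = u / v - 1 := by field_simp
  rw [hlin, one_div, one_div, Real.log_inv, Real.log_inv]
  linarith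

theorem quadratic_le_bregman_barronsRegularizer {β : ℝ} {A : Matrix ι ι ℝ} (hA : A.IsSymm)
    {a p q : ι → ℝ} (ha : 0 ≤ a) (hp : ∀ i, 0 < p i) (hq : ∀ i, 0 < q i) :
    β / 2 * ((p - q) ⬝ᵥ A *ᵥ (p - q)) ≤
      bregman (barronsRegularizer β A a) (barronsRegularizerGrad β A a) p q := by
  have hbarrier : 0 ≤ ∑ i, a i *
      (Real.log (1 / p i) - Real.log (1 / q i) + 1 / q i * (p i - q i)) :=
    sum_nonneg fun i _ => mul_nonneg (ha i) (log_one_div_sub_add_nonneg (hp i) (hq i))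
  have hgrad : barronsRegularizerGrad β A a q ⬝ᵥ (p - q) =
      β * (A *ᵥ q ⬝ᵥ (p - q)) - ∑ i, a i * (1 / q i * (p i - q i)) := by
    simp only [barronsRegularizerGrad, dotProduct, Pi.sub_apply, sub_mul, sum_sub_distrib,
      mul_sum, mul_assoc]
  simp only [mul_add, mul_sub, sum_add_distrib, sum_sub_distrib] at hbarrier hgrad
  rw [bregman, hgrad, ← dotProduct_mulVec_sub_sub_two_mul hA, barronsRegularizer,
    barronsRegularizer]
  linarith

variable [DecidableEq ι]

theorem dotProduct_sub_le_of_quadratic_step {β : ℝ} (hβ : 0 < β) {A : Matrix ι ι ℝ}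
    (hA : A.PosDef) {g p q : ι → ℝ}
    (hstep : p ⬝ᵥ g + β / 2 * ((p - q) ⬝ᵥ A *ᵥ (p - q)) ≤ q ⬝ᵥ g) :
    g ⬝ᵥ (q - p) ≤ 2 / β * (g ⬝ᵥ A⁻¹ *ᵥ g) := by
  have hlinear : β / 2 * ((q - p) ⬝ᵥ A *ᵥ (q - p)) ≤ g ⬝ᵥ (q - p) := by
    rw [← neg_sub p q, mulVec_neg, neg_dotProduct_neg, neg_sub, dotProduct_sub,
      dotProduct_comm g, dotProduct_comm g]
    linarith
  -- The scale `β / 2` of the displacement optimizes the resulting bound.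
  have hyoung := two_mul_dotProduct_sub_le_dotProduct_inv_mulVec hA g ((β / 2) • (q - p))
  simp only [mulVec_smul, smul_dotProduct, dotProduct_smul, smul_eq_mul] at hyoung
  rw [div_mul_eq_mul_div, le_div_iff₀ hβ]
  linarith [mul_le_mul_of_nonneg_left hlinear hβ.le]

theorem sum_dotProduct_sub_le_of_quadratic_steps [Nonempty ι] {T : ℕ} {α β : ℝ} (hα : 0 < α)
    (hβ : 0 < β) {g x : ℕ → ι → ℝ}
    (hstep : ∀ t ∈ Icc 1 T, x (t + 1) ⬝ᵥ g t +
      β / 2 * ((x (t + 1) - x t) ⬝ᵥ regularizedGram α g t *ᵥ (x (t + 1) - x t)) ≤ x t ⬝ᵥ g t) :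
    ∑ t ∈ Icc 1 T, g t ⬝ᵥ (x t - x (t + 1)) ≤
      2 / β * (Fintype.card ι *
        Real.log (1 + (∑ t ∈ Icc 1 T, g t ⬝ᵥ g t) / (Fintype.card ι * α))) :=
  calc ∑ t ∈ Icc 1 T, g t ⬝ᵥ (x t - x (t + 1))
      ≤ ∑ t ∈ Icc 1 T, 2 / β * (g t ⬝ᵥ (regularizedGram α g t)⁻¹ *ᵥ g t) :=
        sum_le_sum fun t ht =>
          dotProduct_sub_le_of_quadratic_step hβ (regularizedGram_posDef hα g t) (hstep t ht)
    _ = 2 / β * ∑ t ∈ Icc 1 T, g t ⬝ᵥ (regularizedGram α g t)⁻¹ *ᵥ g t := (mul_sum ..).symm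
    _ ≤ _ := by
        gcongr
        exact elliptical_potential_le hα g T

end MirrorDescent

section LogLoss

variable {ι : Type*} [Fintype ι]

/-- The gradient at `p` of the loss `-ln ⟨p, r⟩` of a portfolio `p` under the reward vector `r`. -/
noncomputable def logLossGrad (p r : ι → ℝ) : ι → ℝ :=
  fun i => -(r i) / ∑ j, p j * r j

theorem logLossGrad_dotProduct_self_le {p r : ι → ℝ} {b : ℝ} (hb : 0 < b) (hp : ∀ i, b ≤ p i)
    (hr : 0 < r) : logLossGrad p r ⬝ᵥ logLossGrad p r ≤ 1 / b ^ 2 := by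
  have hr_nonneg : ∀ i, 0 ≤ r i := hr.le
  have hsum_pos : 0 < ∑ j, r j := Fintype.sum_pos hr
  have hsum_le : b * ∑ j, r j ≤ ∑ j, p j * r j := by
    rw [mul_sum]
    exact sum_le_sum fun j _ => mul_le_mul_of_nonneg_right (hp j) (hr_nonneg j)
  calc logLossGrad p r ⬝ᵥ logLossGrad p r = (∑ i, r i ^ 2) / (∑ j, p j * r j) ^ 2 := by
        simp only [logLossGrad, dotProduct, sum_div]
        exact sum_congr rfl fun i _ => by ring
    _ ≤ (∑ j, r j) ^ 2 / (b * ∑ j, r j) ^ 2 := by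
        gcongr
        exact sum_sq_le_sq_sum_of_nonneg fun i _ => hr_nonneg i
    _ = 1 / b ^ 2 := by field_simp

theorem barrons_linear_term_general [DecidableEq ι] [Nonempty ι] {T : ℕ} {α β b : ℝ}
    (hα : 0 < α) (hβ : 0 < β) (hb : 0 < b) {K : Set (ι → ℝ)} (hK : ∀ p ∈ K, ∀ i, b ≤ p i)
    {r x a : ℕ → ι → ℝ} (hr : ∀ t ∈ Icc 1 T, 0 < r t) (ha : ∀ t ∈ Icc 1 T, 0 ≤ a t)
    (hx : ∀ t ∈ Icc 1 (T + 1), x t ∈ K) {g : ℕ → ι → ℝ}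
    (hg : ∀ t, g t = logLossGrad (x t) (r t))
    (hmin : ∀ t ∈ Icc 1 T, IsMinOn
      (fun y => y ⬝ᵥ g t + bregman (barronsRegularizer β (regularizedGram α g t) (a t))
        (barronsRegularizerGrad β (regularizedGram α g t) (a t)) y (x t)) K (x (t + 1))) :
    ∑ t ∈ Icc 1 T, g t ⬝ᵥ (x t - x (t + 1)) ≤
      2 / β * (Fintype.card ι * Real.log (1 + T / b ^ 2 / (Fintype.card ι * α))) := by
  have hxK : ∀ t ∈ Icc 1 T, x t ∈ K ∧ x (t + 1) ∈ K := fun t ht => by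
    rw [mem_Icc] at ht
    exact ⟨hx t (mem_Icc.mpr (by lia)), hx (t + 1) (mem_Icc.mpr (by lia))⟩
  have hsum_sq : ∑ t ∈ Icc 1 T, g t ⬝ᵥ g t ≤ T / b ^ 2 := by
    refine (sum_le_card_nsmul _ _ (1 / b ^ 2) fun t ht => ?_).trans_eq (by simp [div_eq_mul_inv])
    rw [hg]
    exact logLossGrad_dotProduct_self_le hb (hK _ (hxK t ht).1) (hr t ht)
  have hsum_nonneg : 0 ≤ ∑ t ∈ Icc 1 T, g t ⬝ᵥ g t :=
    sum_nonneg fun t _ => sum_nonneg fun i _ => mul_self_nonneg (g t i)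
  refine (sum_dotProduct_sub_le_of_quadratic_steps hα hβ fun t ht => ?_).trans (by gcongr)
  obtain ⟨hxt, hxt'⟩ := hxK t ht
  have hopt := isMinOn_iff.mp (hmin t ht) (x t) hxt
  have hquad := quadratic_le_bregman_barronsRegularizer (β := β)
    (isHermitian_iff_isSymm.mp (regularizedGram_posDef hα g t).isHermitian) (ha t ht)
    (fun i => hb.trans_le (hK _ hxt' i)) (fun i => hb.trans_le (hK _ hxt i))
  rw [bregman_self, add_zero] at hopt
  linarith

end LogLoss

theorem log_one_add_pow_three_le {u : ℝ} (hu : 2 ≤ u) :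
    Real.log (1 + u ^ 3) ≤ 4 * Real.log u := by
  have hpow : 1 ≤ u ^ 3 := one_le_pow₀ (by linarith)
  calc Real.log (1 + u ^ 3) ≤ Real.log (u ^ 4) :=
        Real.log_le_log (by linarith) (by nlinarith)
    _ = 4 * Real.log u := by rw [Real.log_pow]; norm_num

theorem barrons_linear_term
    (N T : ℕ) (hN : 2 ≤ N) (hT : N < T)
    (β η : ℝ) (hβ0 : 0 < β) (hβ : β ≤ 1 / 2) (hη0 : 0 < η) (hη : η ≤ 1)
    -- reward vectors: nonnegative with maximum coordinate equal to 1
    (r : ℕ → Fin N → ℝ)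
    (hr : ∀ t ∈ Finset.Icc 1 T, (∀ i, 0 ≤ r t i) ∧ (∃ i, r t i = 1) ∧ ∀ i, r t i ≤ 1)
    -- the iterates x_1, ..., x_{T+1}
    (x : ℕ → Fin N → ℝ)
    (hx1 : ∀ i, x 1 i = 1 / N)
    (hxmem : ∀ t ∈ Finset.Icc 1 (T + 1),
        (∀ i, 0 ≤ x t i) ∧ (∑ i, x t i) = 1 ∧ ∀ i, 1 / ((N : ℝ) * T) ≤ x t i)
    -- the gradients ∇_t = -r_t / ⟨x_t, r_t⟩
    (grad : ℕ → Fin N → ℝ)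
    (hgrad : ∀ t i, grad t i = -(r t i) / ∑ j, x t j * r t j)
    -- the matrices A_t
    (A : ℕ → Matrix (Fin N) (Fin N) ℝ)
    (hA0 : A 0 = (N : ℝ) • (1 : Matrix (Fin N) (Fin N) ℝ))
    (hA : ∀ t ∈ Finset.Icc 1 T, ∀ i j, A t i j = A (t - 1) i j + grad t i * grad t j)
    -- the individual learning rates η_{t,i}
    (eta : ℕ → Fin N → ℝ)
    (heta : ∀ t ∈ Finset.Icc 1 T, ∀ i,
        eta t i = η * Real.exp (⨆ s ∈ Finset.Icc 1 t,
          Real.log (1 / ((N : ℝ) * x s i)) / Real.log T))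
    -- the regularizer ψ_t, its gradient, and its Bregman divergence
    (psi : ℕ → (Fin N → ℝ) → ℝ)
    (hpsi : ∀ t p, psi t p =
        β / 2 * ∑ i, ∑ j, p i * A t i j * p j + ∑ i, (1 / eta t i) * Real.log (1 / p i))
    (gpsi : ℕ → (Fin N → ℝ) → Fin N → ℝ)
    (hgpsi : ∀ t p i, gpsi t p i = β * (∑ j, A t i j * p j) - (1 / eta t i) * (1 / p i))
    (D : ℕ → (Fin N → ℝ) → (Fin N → ℝ) → ℝ)
    (hD : ∀ t p q, D t p q = psi t p - psi t q - ∑ i, gpsi t q i * (p i - q i))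
    -- x_{t+1} minimizes ⟨x, ∇_t⟩ + D_{ψ_t}(x, x_t) over Δ̄_N
    (hmin : ∀ t ∈ Finset.Icc 1 T, ∀ y : Fin N → ℝ,
        ((∀ i, 0 ≤ y i) ∧ (∑ i, y i) = 1 ∧ ∀ i, 1 / ((N : ℝ) * T) ≤ y i) →
        (∑ i, x (t + 1) i * grad t i) + D t (x (t + 1)) (x t)
          ≤ (∑ i, y i * grad t i) + D t y (x t))
    :
    ∑ t ∈ Finset.Icc 1 T, ∑ i, grad t i * (x t i - x (t + 1) i)
      ≤ 8 * N * Real.log T / β := by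
  have hN0 : (0 : ℝ) < N := by exact_mod_cast (by lia : 0 < N)
  have hT2 : (2 : ℝ) ≤ T := by exact_mod_cast (by lia : 2 ≤ T)
  have : Nonempty (Fin N) := ⟨⟨0, by lia⟩⟩
  have hgram := eq_regularizedGram_of_rankOne_updates hA0 fun t ht => Matrix.ext (hA t ht)
  have hbound := barrons_linear_term_general hN0 hβ0 (b := 1 / ((N : ℝ) * T)) (by positivity)
    (K := {y | (∀ i, 0 ≤ y i) ∧ ∑ i, y i = 1 ∧ ∀ i, 1 / ((N : ℝ) * T) ≤ y i})
    (fun p hp => hp.2.2) (r := r) (a := fun t i => 1 / eta t i)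
    (fun t ht => Pi.lt_def.mpr ⟨(hr t ht).1, (hr t ht).2.1.imp fun i hi => by simp [hi]⟩)
    (fun t ht i => one_div_nonneg.mpr <| by rw [heta t ht]; positivity) hxmem
    (fun t => funext (hgrad t)) fun t ht => isMinOn_iff.mpr fun y hy => by
      have hopt := hmin t ht y hy
      simp only [hD, hpsi, hgpsi, sum_sum_mul_mul_eq_dotProduct_mulVec,
        hgram t (mem_Icc.mp ht).2] at hopt
      exact hopt
  have hratio : (T : ℝ) / (1 / (N * T)) ^ 2 / (N * N) = T ^ 3 := by field_simp
  rw [Fintype.card_fin, hratio] at hbound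
  calc ∑ t ∈ Finset.Icc 1 T, ∑ i, grad t i * (x t i - x (t + 1) i)
      ≤ 2 / β * (N * Real.log (1 + T ^ 3)) := hbound
    _ ≤ 2 / β * (N * (4 * Real.log T)) := by gcongr; exact log_one_add_pow_three_le hT2
    _ = 8 * N * Real.log T / β := by ring
end

section
/- Let 0 < γ ≤ 1/25, and for each t let u_t be the minimizer over Δ̄_N of u ↦ Σ_{s=1}^t f_s(u) + (1/γ)·Σ_{i=1}^N ln(1/u_i). Then for every t and every i ∈ [N], 1 − √γ/2 ≤ u_{t+1,i}/u_{t,i} ≤ 1 + √γ/2. -/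
/-!
Write `R` for the logarithmic barrier `∑ i, log (1 / v i)`. Let `x` minimize `Φ + γ⁻¹ R` and let `y`
minimize `Φ + f + γ⁻¹ R` with `f v = -log ⟨v, r⟩`. Adding the two first-order conditions, each in
the direction of the other minimizer, cancels the convex part `Φ` and leaves
`∑ i, (ρ i + (ρ i)⁻¹ - 2) ≤ γ (1 - ⟨x, r⟩ / ⟨y, r⟩)`, where `ρ i = y i / x i`. At the largest ratio
`ρ j` the right-hand side is at most `γ (1 - (ρ j)⁻¹)`, because `x ≥ (ρ j)⁻¹ y` coordinatewise, so
`ρ j ≤ 1 + γ`. Every term on the left is then at most its value at `ρ i = 1 + γ`, and the symmetry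
of `ρ ↦ ρ + ρ⁻¹` under inversion yields both bounds on `ρ i`.
-/

open Set Filter Topology Matrix

section FirstOrder

variable {E : Type*} [AddCommGroup E] [Module ℝ E] {K : Set E}

/- Convexity of `Φ` bounds its increments along the segment by `Φ y - Φ x`, so `Φ` need not be
differentiable. -/
lemma le_add_of_isMinOn_of_hasLineDerivAt {Φ G : E → ℝ} {x y : E} {G' : ℝ}
    (hΦ : ConvexOn ℝ K Φ) (hx : x ∈ K) (hy : y ∈ K) (hmin : IsMinOn (fun v ↦ Φ v + G v) K x)
    (hG : HasLineDerivAt ℝ G G' x (y - x)) : Φ x ≤ Φ y + G' := by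
  suffices hslope : ∀ᶠ t : ℝ in 𝓝[>] 0, Φ x - Φ y ≤ t⁻¹ • (G (x + t • (y - x)) - G x) by
    linarith [ge_of_tendsto hG.tendsto_slope_zero_right hslope]
  filter_upwards [Ioo_mem_nhdsGT (zero_lt_one (α := ℝ))] with t ⟨ht0, ht1⟩
  have hseg : x + t • (y - x) = (1 - t) • x + t • y := by module
  have hconv : Φ (x + t • (y - x)) ≤ (1 - t) * Φ x + t * Φ y :=
    hseg ▸ hΦ.2 hx hy (sub_nonneg.2 ht1.le) ht0.le (by ring)
  have hle : Φ x + G x ≤ Φ (x + t • (y - x)) + G (x + t • (y - x)) :=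
    hmin (hΦ.1.add_smul_sub_mem hx hy ⟨ht0.le, ht1.le⟩)
  rw [smul_eq_mul, le_inv_mul_iff₀ ht0]
  linarith

lemma convexOn_finset_sum {κ : Type*} (hK : Convex ℝ K) {S : Finset κ} {f : κ → E → ℝ}
    (hf : ∀ s ∈ S, ConvexOn ℝ K (f s)) : ConvexOn ℝ K fun v ↦ ∑ s ∈ S, f s v := by
  simpa only [Finset.sum_fn] using
    Finset.sum_induction f (ConvexOn ℝ K) (fun _ _ ↦ ConvexOn.add) (convexOn_const 0 hK) hf

end FirstOrder

section ScalarInequalities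

lemma add_inv_sub_two_nonneg {ρ : ℝ} (hρ : 0 < ρ) : 0 ≤ ρ + ρ⁻¹ - 2 := by
  have hsq : ρ + ρ⁻¹ - 2 = (ρ - 1) ^ 2 / ρ := by
    field_simp
    ring
  exact hsq ▸ div_nonneg (sq_nonneg _) hρ.le

lemma le_one_add_of_add_inv_sub_two_le {ρ γ : ℝ} (hρ : 0 < ρ) (hγ : 0 ≤ γ)
    (h : ρ + ρ⁻¹ - 2 ≤ γ * (1 - ρ⁻¹)) : ρ ≤ 1 + γ := by
  have hsq : (ρ - 1) * (ρ - 1) ≤ γ * (ρ - 1) := by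
    field_simp at h
    linarith
  by_contra! hlt
  linarith [le_of_mul_le_mul_right hsq (by linarith)]

lemma mem_Icc_inv_of_add_inv_le_add_inv {ρ q : ℝ} (hρ : 0 < ρ) (hq : 1 ≤ q)
    (h : ρ + ρ⁻¹ ≤ q + q⁻¹) : ρ ∈ Icc q⁻¹ q := by
  have hq0 : 0 < q := one_pos.trans_le hq
  have hfactor : (ρ - q) * (ρ * q - 1) ≤ 0 := by
    field_simp at h
    linarith
  refine ⟨(inv_le_iff_one_le_mul₀ hq0).2 ?_, ?_⟩ <;> by_contra! hlt
  · have hρq : ρ < q := by nlinarith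
    exact (mul_pos_of_neg_of_neg (sub_neg.2 hρq) (sub_neg.2 hlt)).not_ge hfactor
  · have hρq : 1 < ρ * q := by nlinarith
    exact (mul_pos (sub_pos.2 hlt) (sub_pos.2 hρq)).not_ge hfactor

lemma one_sub_le_inv_one_add {γ : ℝ} (hγ : 0 ≤ γ) : 1 - γ ≤ (1 + γ)⁻¹ := by
  rw [← one_div, le_div_iff₀ (by positivity)]
  nlinarith [sq_nonneg γ]

lemma le_sqrt_div_two {γ : ℝ} (hγ0 : 0 ≤ γ) (hγ : γ ≤ 1 / 4) : γ ≤ √γ / 2 := by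
  have hsqrt : √γ ≤ 1 / 2 := Real.sqrt_le_iff.2 ⟨by norm_num, by linarith⟩
  nlinarith [Real.mul_self_sqrt hγ0, Real.sqrt_nonneg γ]

lemma Icc_inv_one_add_subset_Icc_sqrt {γ : ℝ} (hγ0 : 0 ≤ γ) (hγ : γ ≤ 1 / 4) :
    Icc (1 + γ)⁻¹ (1 + γ) ⊆ Icc (1 - √γ / 2) (1 + √γ / 2) := by
  have hsqrt : γ ≤ √γ / 2 := le_sqrt_div_two hγ0 hγ
  exact Icc_subset_Icc ((sub_le_sub_left hsqrt 1).trans (one_sub_le_inv_one_add hγ0)) (by gcongr)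

end ScalarInequalities

section LogLoss

variable {ι : Type*} [Fintype ι]

/-- The loss `f(v) = -log ⟨v, r⟩` of the portfolio `v` against the reward vector `r`. -/
noncomputable def logLoss (r v : ι → ℝ) : ℝ :=
  -Real.log (v ⬝ᵥ r)

/-- The logarithmic barrier `∑ i, log (1 / v i)` used as regularizer; it has the value of the usual
barrier only at vectors with positive entries. -/
noncomputable def logBarrier (v : ι → ℝ) : ℝ :=
  ∑ i, Real.log (1 / v i)

lemma dotProduct_pos_of_forall_pos {v r : ι → ℝ} (hv : ∀ i, 0 < v i) (hr : 0 < r) :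
    0 < v ⬝ᵥ r := by
  obtain ⟨hr0, i, hi⟩ := Pi.lt_def.1 hr
  exact Finset.sum_pos' (fun j _ ↦ mul_nonneg (hv j).le (hr0 j))
    ⟨i, Finset.mem_univ i, mul_pos (hv i) hi⟩

lemma le_dotProduct_div_dotProduct {x y r : ι → ℝ} {c : ℝ} (hr : 0 ≤ r) (hyr : 0 < y ⬝ᵥ r)
    (h : c • y ≤ x) : c ≤ (x ⬝ᵥ r) / (y ⬝ᵥ r) := by
  rw [le_div_iff₀ hyr, ← smul_eq_mul, ← smul_dotProduct]
  exact dotProduct_le_dotProduct_of_nonneg_right h hr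

lemma convexOn_logLoss {K : Set (ι → ℝ)} {r : ι → ℝ} (hK : Convex ℝ K)
    (hKr : ∀ v ∈ K, 0 < v ⬝ᵥ r) : ConvexOn ℝ K (logLoss r) :=
  (strictConcaveOn_log_Ioi.concaveOn.neg.comp_linearMap
    ((dotProductBilin ℝ ℝ).flip r)).subset hKr hK

lemma convexOn_sum_logLoss {κ : Type*} {K : Set (ι → ℝ)} (hK : Convex ℝ K)
    (hKpos : ∀ v ∈ K, ∀ i, 0 < v i) {S : Finset κ} {r : κ → ι → ℝ} (hr : ∀ s ∈ S, 0 < r s) :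
    ConvexOn ℝ K fun v ↦ ∑ s ∈ S, logLoss (r s) v :=
  convexOn_finset_sum hK fun s hs ↦
    convexOn_logLoss hK fun v hv ↦ dotProduct_pos_of_forall_pos (hKpos v hv) (hr s hs)

lemma hasLineDerivAt_logLoss {r v : ι → ℝ} (hv : 0 < v ⬝ᵥ r) (w : ι → ℝ) :
    HasLineDerivAt ℝ (logLoss r) (1 - (w ⬝ᵥ r) / (v ⬝ᵥ r)) v (w - v) := by
  have hline : HasDerivAt (fun t : ℝ ↦ (v + t • (w - v)) ⬝ᵥ r) ((w - v) ⬝ᵥ r) 0 := by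
    simpa [add_dotProduct, smul_dotProduct] using
      ((hasDerivAt_id (0 : ℝ)).mul_const ((w - v) ⬝ᵥ r)).const_add (v ⬝ᵥ r)
  have hlog := (hline.log (by simpa using hv.ne')).fun_neg
  rwa [zero_smul, add_zero, sub_dotProduct, sub_div, div_self hv.ne', neg_sub] at hlog

lemma logBarrier_eq_sum_logLoss_single [DecidableEq ι] (v : ι → ℝ) :
    logBarrier v = ∑ i, logLoss (Pi.single i 1) v := by
  simp [logBarrier, logLoss]

lemma hasLineDerivAt_logBarrier {v : ι → ℝ} (hv : ∀ i, 0 < v i) (w : ι → ℝ) :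
    HasLineDerivAt ℝ logBarrier (∑ i, (1 - w i / v i)) v (w - v) := by
  classical
  simp only [HasLineDerivAt, logBarrier_eq_sum_logLoss_single]
  refine HasDerivAt.fun_sum fun i _ ↦ ?_
  simpa [HasLineDerivAt] using hasLineDerivAt_logLoss (r := Pi.single i 1) (by simpa using hv i) w

end LogLoss

section Stability

variable {ι : Type*} [Fintype ι]

lemma sum_ratio_add_inv_sub_two_le_of_isMinOn {K : Set (ι → ℝ)} {Φ : (ι → ℝ) → ℝ}
    {r x y : ι → ℝ} {γ : ℝ} (hΦ : ConvexOn ℝ K Φ) (hγ : 0 < γ) (hx : x ∈ K) (hy : y ∈ K)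
    (hxpos : ∀ i, 0 < x i) (hypos : ∀ i, 0 < y i) (hyr : 0 < y ⬝ᵥ r)
    (hxmin : IsMinOn (fun v ↦ Φ v + 1 / γ * logBarrier v) K x)
    (hymin : IsMinOn (fun v ↦ Φ v + logLoss r v + 1 / γ * logBarrier v) K y) :
    ∑ i, (y i / x i + (y i / x i)⁻¹ - 2) ≤ γ * (1 - (x ⬝ᵥ r) / (y ⬝ᵥ r)) := by
  simp only [add_assoc] at hymin
  have hopt_x : Φ x ≤ Φ y + 1 / γ * ∑ i, (1 - y i / x i) :=
    le_add_of_isMinOn_of_hasLineDerivAt hΦ hx hy hxmin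
      (HasDerivAt.const_mul (1 / γ) (hasLineDerivAt_logBarrier hxpos y))
  have hopt_y : Φ y ≤ Φ x + ((1 - (x ⬝ᵥ r) / (y ⬝ᵥ r)) + 1 / γ * ∑ i, (1 - x i / y i)) :=
    le_add_of_isMinOn_of_hasLineDerivAt hΦ hy hx hymin
      (HasDerivAt.fun_add (hasLineDerivAt_logLoss hyr x)
        (HasDerivAt.const_mul (1 / γ) (hasLineDerivAt_logBarrier hypos x)))
  have hsum : ∑ i, (y i / x i + (y i / x i)⁻¹ - 2)
      = -(∑ i, (1 - y i / x i) + ∑ i, (1 - x i / y i)) := by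
    rw [← Finset.sum_add_distrib, ← Finset.sum_neg_distrib]
    exact Finset.sum_congr rfl fun i _ ↦ by rw [inv_div]; ring
  rw [hsum, ← div_le_iff₀' hγ, div_eq_mul_one_div]
  linarith

lemma ratio_mem_Icc_of_sum_add_inv_sub_two_le {x y r : ι → ℝ} {γ : ℝ} (hγ : 0 ≤ γ)
    (hx : ∀ i, 0 < x i) (hy : ∀ i, 0 < y i) (hr : 0 < r)
    (h : ∑ i, (y i / x i + (y i / x i)⁻¹ - 2) ≤ γ * (1 - (x ⬝ᵥ r) / (y ⬝ᵥ r))) (i : ι) :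
    y i / x i ∈ Icc (1 + γ)⁻¹ (1 + γ) := by
  have : Nonempty ι := ⟨i⟩
  have hρ : ∀ k, 0 < y k / x k := fun k ↦ div_pos (hy k) (hx k)
  obtain ⟨j, hj⟩ := Finite.exists_max fun k ↦ y k / x k
  have hratio : (y j / x j)⁻¹ ≤ (x ⬝ᵥ r) / (y ⬝ᵥ r) := by
    refine le_dotProduct_div_dotProduct hr.le (dotProduct_pos_of_forall_pos hy hr) fun k ↦ ?_
    exact (inv_mul_le_iff₀ (hρ j)).2 ((div_le_iff₀ (hx k)).1 (hj k))
  have hterm : ∀ k, y k / x k + (y k / x k)⁻¹ - 2 ≤ γ * (1 - (y j / x j)⁻¹) := fun k ↦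
    calc y k / x k + (y k / x k)⁻¹ - 2
      _ ≤ ∑ l, (y l / x l + (y l / x l)⁻¹ - 2) :=
        Finset.single_le_sum (fun l _ ↦ add_inv_sub_two_nonneg (hρ l)) (Finset.mem_univ k)
      _ ≤ γ * (1 - (x ⬝ᵥ r) / (y ⬝ᵥ r)) := h
      _ ≤ γ * (1 - (y j / x j)⁻¹) := by gcongr
  have hmax : y j / x j ≤ 1 + γ := le_one_add_of_add_inv_sub_two_le (hρ j) hγ (hterm j)
  refine mem_Icc_inv_of_add_inv_le_add_inv (hρ i) (by linarith) ?_
  calc y i / x i + (y i / x i)⁻¹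
    _ ≤ 2 + γ * (1 - (y j / x j)⁻¹) := by linarith [hterm i]
    _ ≤ 2 + γ * (1 - (1 + γ)⁻¹) := by gcongr; exact hρ j
    _ = 1 + γ + (1 + γ)⁻¹ := by field_simp; ring

theorem regularized_leader_stability_general {K : Set (ι → ℝ)} {Φ : (ι → ℝ) → ℝ}
    {r x y : ι → ℝ} {γ : ℝ} (hK : ∀ v ∈ K, ∀ i, 0 < v i) (hΦ : ConvexOn ℝ K Φ) (hγ : 0 < γ)
    (hr : 0 < r) (hx : x ∈ K) (hy : y ∈ K)
    (hxmin : IsMinOn (fun v ↦ Φ v + 1 / γ * logBarrier v) K x)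
    (hymin : IsMinOn (fun v ↦ Φ v + logLoss r v + 1 / γ * logBarrier v) K y) (i : ι) :
    y i / x i ∈ Icc (1 + γ)⁻¹ (1 + γ) :=
  ratio_mem_Icc_of_sum_add_inv_sub_two_le hγ.le (hK x hx) (hK y hy) hr
    (sum_ratio_add_inv_sub_two_le_of_isMinOn hΦ hγ hx hy (hK x hx) (hK y hy)
      (dotProduct_pos_of_forall_pos (hK y hy) hr) hxmin hymin) i

end Stability

section TruncatedSimplex

variable {ι : Type*} [Fintype ι]

variable (ι) in
/-- The part of the probability simplex on which every coordinate is at least `δ`; the set `Δ̄_N`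
is the case `δ = 1 / (N T)`. -/
def truncatedSimplex (δ : ℝ) : Set (ι → ℝ) :=
  {v | (∀ i, 0 ≤ v i) ∧ ∑ i, v i = 1 ∧ ∀ i, δ ≤ v i}

lemma convex_truncatedSimplex (δ : ℝ) : Convex ℝ (truncatedSimplex ι δ) := by
  have heq : truncatedSimplex ι δ = stdSimplex ℝ ι ∩ Ici fun _ ↦ δ :=
    Set.ext fun _ ↦ and_assoc.symm
  exact heq ▸ (convex_stdSimplex ℝ ι).inter (convex_Ici _)

end TruncatedSimplex

/- STATEMENT 6: Lemma 8 of the paper, multiplicative stability of the regularized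
   leaders u_t = argmin_{u ∈ Δ̄_N} Σ_{s=1}^t f_s(u) + (1/γ)·Σ_i ln(1/u_i). -/

theorem regularized_leader_stability
    (N T : ℕ) (hN : 2 ≤ N) (hT : N < T)
    (γ : ℝ) (hγ0 : 0 < γ) (hγ : γ ≤ 1 / 25)
    -- reward vectors: nonnegative and nonzero
    (r : ℕ → Fin N → ℝ)
    (hr : ∀ s, (∀ i, 0 ≤ r s i) ∧ r s ≠ 0)
    -- u_t is the minimizer over Δ̄_N of u ↦ Σ_{s=1}^t (-ln⟨u, r_s⟩) + (1/γ)·Σ_i ln(1/u_i)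
    (u : ℕ → Fin N → ℝ)
    (humem : ∀ t, (∀ i, 0 ≤ u t i) ∧ (∑ i, u t i) = 1 ∧ ∀ i, 1 / ((N : ℝ) * T) ≤ u t i)
    (hmin : ∀ t, ∀ v : Fin N → ℝ,
        ((∀ i, 0 ≤ v i) ∧ (∑ i, v i) = 1 ∧ ∀ i, 1 / ((N : ℝ) * T) ≤ v i) →
        (∑ s ∈ Finset.Icc 1 t, -Real.log (∑ i, u t i * r s i))
            + (1 / γ) * ∑ i, Real.log (1 / u t i)
          ≤ (∑ s ∈ Finset.Icc 1 t, -Real.log (∑ i, v i * r s i))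
            + (1 / γ) * ∑ i, Real.log (1 / v i)) :
    ∀ t, ∀ i, 1 - Real.sqrt γ / 2 ≤ u (t + 1) i / u t i ∧
      u (t + 1) i / u t i ≤ 1 + Real.sqrt γ / 2 := by
  intro t i
  have hδ : (0 : ℝ) < 1 / (N * T) :=
    one_div_pos.2 (mod_cast Nat.mul_pos (zero_lt_two.trans_le hN) (Nat.zero_lt_of_lt hT))
  have hpos : ∀ v ∈ truncatedSimplex (Fin N) (1 / (N * T)), ∀ i, 0 < v i :=
    fun _ hv i ↦ hδ.trans_le (hv.2.2 i)
  have hrpos : ∀ s, 0 < r s := fun s ↦ lt_of_le_of_ne' (hr s).1 (hr s).2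
  have hmin_succ := hmin (t + 1)
  simp only [Finset.sum_Icc_succ_top (Nat.le_add_left 1 t)] at hmin_succ
  exact Icc_inv_one_add_subset_Icc_sqrt hγ0.le (by linarith)
    (regularized_leader_stability_general hpos
      (convexOn_sum_logLoss (convex_truncatedSimplex _) hpos fun s _ ↦ hrpos s)
      hγ0 (hrpos (t + 1)) (humem t) (humem (t + 1)) (hmin t) hmin_succ i)
end
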